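/- Let (S, Sigma, lambda) be a probability space, G a sub-sigma-algebra of Sigma such that Sigma has no G-atom, and G a Sigma-measurable, integrably bounded, closed-valued correspondence from S to R^m. Then I^{(Sigma,G)}_G = I^{(Sigma,G)}_{co(G)}; equivalently, for every Sigma-measurable selection f of the pointwise convex hull co(G) there exists a Sigma-measurable selection g of G with E(g | G) = E(f | G) lambda-almost everywhere, and conversely every Sigma-measurable selection of G is a selection of co(G). -/

import Mathlib

open MeasureTheory

/-- `D` is a `G`-atom for the measure `lam`. -/
def IsGAtom {S : Type*} (mS : MeasurableSpace S) (G : MeasurableSpace S)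
    (lam : @Measure S mS) (D : Set S) : Prop :=
  0 < lam D ∧ ∀ D₀ ⊆ D, MeasurableSet[mS] D₀ →
    ∃ D₁ : Set S, MeasurableSet[G] D₁ ∧ lam (symmDiff D₀ (D₁ ∩ D)) = 0

/-!
Let `f` be a measurable selection of `co F`, first for `F` bounded and the measure finite. The
square-integrable selections of `co F` with the conditional expectation of `f` form a nonempty,
bounded, closed and convex subset of the Hilbert space `L²`, which therefore has an extreme point
`u`. By a measurable form of Carathéodory's theorem, `u = ∑ wᵢ gᵢ` for selections `gᵢ` of `F` and
convex weights `wᵢ`, and `u ± vᵢ` is a selection of `co F` for `vᵢ = wᵢ (gᵢ - u)`. If `vᵢ` did not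
vanish almost everywhere, then, since `{vᵢ ≠ 0}` contains no `G`-atom, there would be a function
`φ`, not almost everywhere zero on `{vᵢ ≠ 0}`, with `E(φ vᵢ | G) = 0` and `|φ| ≤ 1`; but then
`u = ½ (u + φ vᵢ) + ½ (u - φ vᵢ)` would not be extreme. Hence every `vᵢ` vanishes almost
everywhere, and `u = gᵢ` wherever `wᵢ ≠ 0`, so `u` is a selection of `F`.

To find `φ`, split `{vᵢ ≠ 0}` into `dim E + 1` disjoint sets `Aⱼ` whose conditional probabilities
given `G` are simultaneously positive on a non-null set; the vectors `E(1_{Aⱼ} vᵢ | G)` are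
linearly dependent, with `G`-measurable coefficients `aⱼ`, and `φ = ∑ aⱼ 1_{Aⱼ}`.

An integrable bound reduces to the bounded case on each set of a countable measurable partition.
-/

open Set Filter Module TopologicalSpace
open scoped ENNReal

/-- A compact-valued correspondence `X` from `S` to `E` (possibly with empty values) that is
measurable in the sense that it hits every open set on a measurable set. -/
structure MeasurableCompactCorrespondence {S E : Type*} [MeasurableSpace S] [TopologicalSpace E]
    (X : S → Set E) : Prop where
  isCompact : ∀ s, IsCompact (X s)
  measurableSet_hits_of_isOpen : ∀ U, IsOpen U → MeasurableSet {s | (X s ∩ U).Nonempty}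

namespace MeasurableCompactCorrespondence

variable {S : Type*} [MeasurableSpace S]

section Basis

variable {E E' ι : Type*} [TopologicalSpace E] [TopologicalSpace E']

theorem of_isTopologicalBasis [SecondCountableTopology E] {X : S → Set E} {B : Set (Set E)}
    (hB : IsTopologicalBasis B) (hX : ∀ s, IsCompact (X s))
    (hits : ∀ b ∈ B, MeasurableSet {s | (X s ∩ b).Nonempty}) :
    MeasurableCompactCorrespondence X := by
  refine ⟨hX, fun U hU => ?_⟩
  obtain ⟨T, hT, hTB, hTU⟩ :=
    isOpen_sUnion_countable {b ∈ B | b ⊆ U} fun b hb => hB.isOpen hb.1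
  have : {s | (X s ∩ U).Nonempty} = ⋃ b ∈ T, {s | (X s ∩ b).Nonempty} := by
    ext s
    rw [hB.open_eq_sUnion' hU, ← hTU]
    simp only [sUnion_eq_biUnion, inter_iUnion, nonempty_iUnion, mem_ofPred_eq, mem_iUnion]
  rw [this]
  exact MeasurableSet.biUnion hT fun b hb => hits b (hTB hb).1

theorem const {C : Set E} (hC : IsCompact C) :
    MeasurableCompactCorrespondence fun _ : S => C :=
  ⟨fun _ => hC, fun _ _ => MeasurableSet.const _⟩

theorem singleton [MeasurableSpace E] [OpensMeasurableSpace E] {p : S → E} (hp : Measurable p) :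
    MeasurableCompactCorrespondence fun s => {p s} :=
  ⟨fun _ => isCompact_singleton, fun U hU => by
    simp only [singleton_inter_nonempty]
    exact hp hU.measurableSet⟩

theorem prod [SecondCountableTopology E] [SecondCountableTopology E'] {X : S → Set E}
    {Y : S → Set E'} (hX : MeasurableCompactCorrespondence X)
    (hY : MeasurableCompactCorrespondence Y) :
    MeasurableCompactCorrespondence fun s => X s ×ˢ Y s := by
  refine of_isTopologicalBasis (isTopologicalBasis_opens.prod isTopologicalBasis_opens)
    (fun s => (hX.isCompact s).prod (hY.isCompact s)) ?_
  rintro _ ⟨U, hU, V, hV, rfl⟩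
  simp only [prod_inter_prod, prod_nonempty_iff]
  exact (hX.measurableSet_hits_of_isOpen U hU).inter (hY.measurableSet_hits_of_isOpen V hV)

theorem pi [Countable ι] [SecondCountableTopology E] {X : S → Set E}
    (hX : MeasurableCompactCorrespondence X) :
    MeasurableCompactCorrespondence fun s => univ.pi fun _ : ι => X s := by
  classical
  refine of_isTopologicalBasis (isTopologicalBasis_pi fun _ => isTopologicalBasis_opens)
    (fun s => isCompact_univ_pi fun _ => hX.isCompact s) ?_
  rintro _ ⟨U, F, hU, rfl⟩
  rw [← univ_pi_ite]
  have : {s | ((univ.pi fun _ : ι => X s) ∩ univ.pi fun i => if i ∈ (F : Set ι) then U i else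
      univ).Nonempty} = ⋂ i, {s | (X s ∩ if i ∈ (F : Set ι) then U i else univ).Nonempty} := by
    ext s
    rw [mem_ofPred_eq, ← pi_inter_distrib, univ_pi_nonempty_iff, mem_iInter]
    rfl
  rw [this]
  refine MeasurableSet.iInter fun i => hX.measurableSet_hits_of_isOpen _ ?_
  split_ifs with hi
  exacts [hU i hi, isOpen_univ]

end Basis

section Metric

variable {P E : Type*} [PseudoMetricSpace P] [PseudoMetricSpace E] {X : S → Set E}

theorem measurableSet_hits_of_isClosed (hX : MeasurableCompactCorrespondence X) {C : Set E}
    (hC : IsClosed C) : MeasurableSet {s | (X s ∩ C).Nonempty} := by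
  have : {s | (X s ∩ C).Nonempty} =
      ⋂ n : ℕ, {s | (X s ∩ Metric.thickening (1 / ((n : ℝ) + 1)) C).Nonempty} := by
    ext s
    simp only [mem_ofPred_eq, mem_iInter]
    refine ⟨fun h n => h.mono (inter_subset_inter_right _
      (Metric.self_subset_thickening (by positivity) _)), fun h => ?_⟩
    by_contra hdisj
    rw [← not_disjoint_iff_nonempty_inter, not_not] at hdisj
    obtain ⟨δ, hδ, hδdisj⟩ := hdisj.exists_thickenings (hX.isCompact s) hC
    obtain ⟨n, hn⟩ := exists_nat_one_div_lt hδ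
    exact not_disjoint_iff_nonempty_inter.2 (h n) (hδdisj.mono
      (Metric.self_subset_thickening hδ _) (Metric.thickening_mono hn.le _))
  rw [this]
  exact MeasurableSet.iInter fun n =>
    hX.measurableSet_hits_of_isOpen _ Metric.isOpen_thickening

theorem of_isClosed (hX : ∀ s, IsCompact (X s))
    (hits : ∀ C, IsClosed C → MeasurableSet {s | (X s ∩ C).Nonempty}) :
    MeasurableCompactCorrespondence X := by
  refine ⟨hX, fun U hU => ?_⟩
  obtain ⟨C, hC, -, rfl, -⟩ := hU.exists_iUnion_isClosed
  simpa only [inter_iUnion, nonempty_iUnion, ofPred_exists] using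
    MeasurableSet.iUnion fun n => hits (C n) (hC n)

variable [SecondCountableTopology P] [MeasurableSpace P] [OpensMeasurableSpace P]
  [SecondCountableTopology E]

theorem sep_mem (hX : MeasurableCompactCorrespondence X) {p : S → P} (hp : Measurable p)
    {K : Set (P × E)} (hK : IsClosed K) :
    MeasurableCompactCorrespondence fun s => {x ∈ X s | (p s, x) ∈ K} := by
  refine of_isClosed
    (fun s => (hX.isCompact s).inter_right (hK.preimage (Continuous.prodMk_right (p s))))
    fun C hC => ?_
  convert ((singleton hp).prod hX).measurableSet_hits_of_isClosed
    (hK.inter (hC.preimage continuous_snd)) using 1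
  ext s
  constructor
  · rintro ⟨x, ⟨hx, hxK⟩, hxC⟩
    exact ⟨(p s, x), ⟨rfl, hx⟩, hxK, hxC⟩
  · rintro ⟨⟨_, x⟩, ⟨rfl, hx⟩, hxK, hxC⟩
    exact ⟨x, ⟨hx, hxK⟩, hxC⟩

end Metric

section Selection

variable {E ι : Type*} [PseudoMetricSpace E] {X : S → Set E}

theorem measurable_sInf_image (hX : MeasurableCompactCorrespondence X)
    (hne : ∀ s, (X s).Nonempty) {c : E → ℝ} (hc : Continuous c) :
    Measurable fun s => sInf (c '' X s) := by
  refine measurable_of_Iic fun q => ?_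
  convert hX.measurableSet_hits_of_isClosed (isClosed_Iic.preimage hc : IsClosed (c ⁻¹' Iic q))
    using 1
  ext s
  have hcompact := (hX.isCompact s).image hc
  refine ⟨fun h => ?_, fun ⟨x, hx, hxq⟩ => (csInf_le hcompact.bddBelow ⟨x, hx, rfl⟩).trans hxq⟩
  obtain ⟨x, hx, hxc⟩ := hcompact.sInf_mem ((hne s).image c)
  exact ⟨x, hx, hxc.trans_le h⟩

variable [SecondCountableTopology E]

theorem argmin (hX : MeasurableCompactCorrespondence X) (hne : ∀ s, (X s).Nonempty)
    {c : E → ℝ} (hc : Continuous c) :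
    MeasurableCompactCorrespondence fun s => {x ∈ X s | c x ≤ sInf (c '' X s)} :=
  hX.sep_mem (hX.measurable_sInf_image hne hc) (K := {y | c y.2 ≤ y.1})
    (isClosed_le (hc.comp continuous_snd) continuous_fst)

theorem exists_subcorrespondence_subsingleton_image (hX : MeasurableCompactCorrespondence X)
    (hne : ∀ s, (X s).Nonempty) {c : ι → E → ℝ} (hc : ∀ i, Continuous (c i)) (t : Finset ι) :
    ∃ Y : S → Set E, MeasurableCompactCorrespondence Y ∧ (∀ s, (Y s).Nonempty) ∧
      (∀ s, Y s ⊆ X s) ∧ ∀ i ∈ t, ∀ s, (c i '' Y s).Subsingleton := by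
  classical
  induction t using Finset.induction_on with
  | empty => exact ⟨X, hX, hne, fun s => Subset.rfl, by simp⟩
  | insert i t _ ih =>
    obtain ⟨Y, hY, hYne, hYX, hYt⟩ := ih
    refine ⟨_, hY.argmin hYne (hc i), fun s => ?_, fun s => (sep_subset _ _).trans (hYX s), ?_⟩
    · obtain ⟨x, hx, hxc⟩ := ((hY.isCompact s).image (hc i)).sInf_mem ((hYne s).image (c i))
      exact ⟨x, hx, hxc.le⟩
    · intro j hj s
      rcases Finset.mem_insert.1 hj with rfl | hj
      · have hbdd := ((hY.isCompact s).image (hc j)).bddBelow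
        rintro _ ⟨x, ⟨hx, hxmin⟩, rfl⟩ _ ⟨y, ⟨hy, hymin⟩, rfl⟩
        exact le_antisymm (hxmin.trans (csInf_le hbdd ⟨y, hy, rfl⟩))
          (hymin.trans (csInf_le hbdd ⟨x, hx, rfl⟩))
      · exact (hYt j hj s).anti (image_mono (sep_subset _ _))

end Selection

variable {P E : Type*} [NormedAddCommGroup E] [NormedSpace ℝ E] [FiniteDimensional ℝ E]
  [MeasurableSpace E] [BorelSpace E] {X : S → Set E}

theorem exists_measurable_selection (hX : MeasurableCompactCorrespondence X)
    (hne : ∀ s, (X s).Nonempty) : ∃ g : S → E, Measurable g ∧ ∀ s, g s ∈ X s := by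
  have : ProperSpace E := FiniteDimensional.proper ℝ E
  let b := finBasis ℝ E
  obtain ⟨Y, hY, hYne, hYX, hYb⟩ := hX.exists_subcorrespondence_subsingleton_image hne
    (fun i => (b.coord i).continuous_of_finiteDimensional) Finset.univ
  choose g hg using hYne
  have hY_eq : ∀ s, Y s = {g s} := fun s =>
    (subsingleton_iff_singleton (hg s)).1 fun x hx y hy =>
      b.ext_elem fun i => hYb i (Finset.mem_univ i) s ⟨x, hx, rfl⟩ ⟨y, hy, rfl⟩
  refine ⟨g, measurable_of_isClosed fun C hC => ?_, fun s => hYX s (hg s)⟩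
  have hits := hY.measurableSet_hits_of_isClosed hC
  simp only [hY_eq, singleton_inter_nonempty] at hits
  exact hits

theorem exists_measurable_selection_of_forall_exists [PseudoMetricSpace P]
    [SecondCountableTopology P] [MeasurableSpace P] [OpensMeasurableSpace P]
    (hX : MeasurableCompactCorrespondence X) {p : S → P} (hp : Measurable p) {K : Set (P × E)}
    (hK : IsClosed K) (hne : ∀ s, ∃ x ∈ X s, (p s, x) ∈ K) :
    ∃ g : S → E, Measurable g ∧ ∀ s, g s ∈ X s ∧ (p s, g s) ∈ K :=
  have : ProperSpace E := FiniteDimensional.proper ℝ E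
  (hX.sep_mem hp hK).exists_measurable_selection hne

end MeasurableCompactCorrespondence

section Caratheodory

variable {E : Type*} [NormedAddCommGroup E] [NormedSpace ℝ E]

theorem exists_stdSimplex_sum_smul_eq_of_mem_convexHull [FiniteDimensional ℝ E] {A : Set E}
    {x : E} (hx : x ∈ convexHull ℝ A) :
    ∃ w ∈ stdSimplex ℝ (Fin (finrank ℝ E + 1)), ∃ z : Fin (finrank ℝ E + 1) → E,
      (∀ i, z i ∈ A) ∧ ∑ i, w i • z i = x := by
  obtain ⟨ι, _, z, w, hz, hindep, hw, hw_sum, hwz⟩ := eq_pos_convex_span_of_mem_convexHull hx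
  obtain ⟨a, ha⟩ : A.Nonempty := convexHull_nonempty_iff.1 ⟨x, hx⟩
  obtain ⟨e⟩ : Nonempty (ι ↪ Fin (finrank ℝ E + 1)) := by
    refine Function.Embedding.nonempty_of_card_le ?_
    rw [Fintype.card_fin]
    exact hindep.card_le_finrank_succ.trans (Nat.succ_le_succ (Submodule.finrank_le _))
  set w' := Function.extend e w 0
  set z' := Function.extend e z fun _ => a
  have hw' : ∀ i, w' (e i) = w i := e.injective.extend_apply _ _
  have hz' : ∀ i, z' (e i) = z i := e.injective.extend_apply _ _
  have hw'_zero : ∀ j ∉ range e, w' j = 0 := fun j hj => Function.extend_apply' _ _ j hj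
  refine ⟨w', ⟨fun j => ?_, ?_⟩, z', fun j => ?_, ?_⟩
  · by_cases hj : j ∈ range e
    · obtain ⟨i, rfl⟩ := hj
      exact (hw' i).symm ▸ (hw i).le
    · exact (hw'_zero j hj).ge
  · rw [← hw_sum]
    exact (Fintype.sum_of_injective e e.injective _ _ hw'_zero fun i => (hw' i).symm).symm
  · by_cases hj : j ∈ range e
    · obtain ⟨i, rfl⟩ := hj
      exact (hz' i).symm ▸ hz ⟨i, rfl⟩
    · have hz'_a : z' j = a := Function.extend_apply' _ _ j hj
      exact hz'_a ▸ ha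
  · rw [← hwz]
    refine (Fintype.sum_of_injective e e.injective _ _ (fun j hj => ?_) fun i => ?_).symm
    · rw [hw'_zero j hj, zero_smul]
    · rw [hw', hz']

theorem isCompact_convexHull [FiniteDimensional ℝ E] {A : Set E} (hA : IsCompact A) :
    IsCompact (convexHull ℝ A) := by
  have himage : convexHull ℝ A =
      (fun q : (Fin (finrank ℝ E + 1) → ℝ) × (Fin (finrank ℝ E + 1) → E) => ∑ i, q.1 i • q.2 i) ''
        (stdSimplex ℝ (Fin (finrank ℝ E + 1)) ×ˢ univ.pi fun _ => A) := by
    refine Subset.antisymm (fun x hx => ?_) ?_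
    · obtain ⟨w, hw, z, hz, rfl⟩ := exists_stdSimplex_sum_smul_eq_of_mem_convexHull hx
      exact ⟨(w, z), ⟨hw, fun i _ => hz i⟩, rfl⟩
    · rintro _ ⟨q, ⟨hw, hz⟩, rfl⟩
      exact (convex_convexHull ℝ A).sum_mem (fun i _ => hw.1 i) hw.2
        fun i _ => subset_convexHull ℝ A (hz i (mem_univ i))
  rw [himage]
  exact ((isCompact_stdSimplex ℝ _).prod (isCompact_univ_pi fun _ => hA)).image (by fun_prop)

theorem MeasurableCompactCorrespondence.exists_measurable_caratheodory {S : Type*}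
    [MeasurableSpace S] [FiniteDimensional ℝ E] [MeasurableSpace E] [BorelSpace E]
    {F : S → Set E} (hF : MeasurableCompactCorrespondence F) {f : S → E} (hf : Measurable f)
    (hfF : ∀ s, f s ∈ convexHull ℝ (F s)) :
    ∃ (w : Fin (finrank ℝ E + 1) → S → ℝ) (g : Fin (finrank ℝ E + 1) → S → E),
      (∀ i, Measurable (w i)) ∧ (∀ i, Measurable (g i)) ∧
      (∀ s, (fun i => w i s) ∈ stdSimplex ℝ (Fin (finrank ℝ E + 1))) ∧
      (∀ i s, g i s ∈ F s) ∧ ∀ s, ∑ i, w i s • g i s = f s := by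
  have : ProperSpace E := FiniteDimensional.proper ℝ E
  obtain ⟨q, hq, hqF⟩ := ((const (isCompact_stdSimplex ℝ (Fin (finrank ℝ E + 1)))).prod
    hF.pi).exists_measurable_selection_of_forall_exists hf
    (K := {y : E × (Fin (finrank ℝ E + 1) → ℝ) × (Fin (finrank ℝ E + 1) → E) |
      ∑ i, y.2.1 i • y.2.2 i = y.1}) (isClosed_eq (by fun_prop) (by fun_prop))
    fun s => by
      obtain ⟨w, hw, z, hz, hwz⟩ := exists_stdSimplex_sum_smul_eq_of_mem_convexHull (hfF s)
      exact ⟨(w, z), ⟨hw, fun i _ => hz i⟩, hwz⟩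
  exact ⟨fun i s => (q s).1 i, fun i s => (q s).2 i, fun i => by fun_prop, fun i => by fun_prop,
    fun s => (hqF s).1.1, fun i s => (hqF s).1.2 i (mem_univ i), fun s => (hqF s).2⟩

end Caratheodory

section Convex

variable {E ι : Type*} [AddCommGroup E] [Module ℝ E] {K : Set E}

theorem add_smul_mem_of_add_mem_of_sub_mem (hK : Convex ℝ K) {x v : E}
    (hadd : x + v ∈ K) (hsub : x - v ∈ K) {t : ℝ} (ht : |t| ≤ 1) : x + t • v ∈ K := by
  obtain ⟨ht₁, ht₂⟩ := abs_le.1 ht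
  have := hK hadd hsub (a := (1 + t) / 2) (b := (1 - t) / 2) (by linarith) (by linarith) (by ring)
  convert this using 1
  module

variable [Fintype ι] {w : ι → ℝ} {z : ι → E}

theorem add_smul_sub_sum_mem (hK : Convex ℝ K) (hw : w ∈ stdSimplex ℝ ι)
    (hz : ∀ i, z i ∈ K) (i : ι) :
    ∑ j, w j • z j + w i • (z i - ∑ j, w j • z j) ∈ K := by
  convert hK (hK.sum_mem (fun j _ => hw.1 j) hw.2 fun j _ => hz j) (hz i)
    (sub_nonneg.2 (mem_Icc_of_mem_stdSimplex hw i).2) (hw.1 i) (sub_add_cancel _ _) using 1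
  module

theorem sub_smul_sub_sum_mem (hK : Convex ℝ K) (hw : w ∈ stdSimplex ℝ ι)
    (hz : ∀ i, z i ∈ K) (i : ι) :
    ∑ j, w j • z j - w i • (z i - ∑ j, w j • z j) ∈ K := by
  classical
  have hsum : ∑ j, ((1 + w i) * w j - if j = i then w i else 0) = 1 := by
    rw [Finset.sum_sub_distrib, ← Finset.mul_sum, hw.2, Finset.sum_ite_eq' Finset.univ i,
      if_pos (Finset.mem_univ i)]
    ring
  convert hK.sum_mem (fun j _ => ?_) hsum (fun j _ => hz j) using 1
  · simp only [sub_smul, mul_smul, ite_smul, zero_smul, Finset.sum_sub_distrib, ← Finset.smul_sum,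
      Finset.sum_ite_eq', Finset.mem_univ, if_true]
    module
  · split_ifs with hj
    · subst hj
      nlinarith [mul_self_nonneg (w j)]
    · nlinarith [hw.1 i, hw.1 j, mul_nonneg (hw.1 i) (hw.1 j)]

end Convex

section CondSupport

variable {S : Type*} {G : MeasurableSpace S} [mS : MeasurableSpace S] {μ : Measure S}

/-- The conditional support of the set `D` given `G`: the set on which the conditional probability
of `D` does not vanish. Up to null sets it is the smallest `G`-measurable set containing `D`. -/
def condSupport (G : MeasurableSpace S) {_ : MeasurableSpace S} (μ : Measure S) (D : Set S) :
    Set S :=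
  {s | μ[D.indicator (1 : S → ℝ) | G] s ≠ 0}

theorem measurableSet_condSupport (D : Set S) : MeasurableSet[G] (condSupport G μ D) :=
  (stronglyMeasurable_condExp.measurable (measurableSet_singleton (0 : ℝ))).compl

variable [IsFiniteMeasure μ] {B D D' : Set S}

theorem measure_inter_condSupport_eq_zero_iff (hG : G ≤ mS) (hB : MeasurableSet[G] B)
    (hD : MeasurableSet D) : μ (B ∩ condSupport G μ D) = 0 ↔ μ (B ∩ D) = 0 := by
  have hint : Integrable (D.indicator (1 : S → ℝ)) μ := (integrable_const 1).indicator hD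
  have hnonneg : 0 ≤ᵐ[μ] μ[D.indicator (1 : S → ℝ) | G] :=
    condExp_nonneg (.of_forall fun s => indicator_nonneg (fun _ _ => zero_le_one) s)
  have hreal : ∫ s in B, (μ[D.indicator (1 : S → ℝ) | G]) s ∂μ = μ.real (B ∩ D) := by
    rw [setIntegral_condExp hG hint hB, setIntegral_indicator hD]
    simp
  rw [← measureReal_eq_zero_iff (s := B ∩ D), ← hreal, setIntegral_eq_zero_iff_of_nonneg_ae
    (ae_restrict_of_ae hnonneg) integrable_condExp.integrableOn, EventuallyEq,
    ae_restrict_iff' (hG _ hB), ae_iff]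
  simp only [Pi.zero_apply, Classical.not_imp]
  rfl

theorem measure_condSupport_ne_zero (hG : G ≤ mS) (hD : MeasurableSet D) (hμD : μ D ≠ 0) :
    μ (condSupport G μ D) ≠ 0 := by
  simpa only [univ_inter, ne_eq] using
    (measure_inter_condSupport_eq_zero_iff hG MeasurableSet.univ hD).not.2 (by rwa [univ_inter])

theorem condSupport_ae_le_of_subset (hG : G ≤ mS) (hB : MeasurableSet[G] B)
    (hD : MeasurableSet D) (hDB : D ⊆ B) : condSupport G μ D ≤ᵐ[μ] B := by
  rw [ae_le_set, sdiff_eq, inter_comm, measure_inter_condSupport_eq_zero_iff hG hB.compl hD,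
    (disjoint_compl_left_iff_subset.2 hDB).inter_eq, measure_empty]

theorem exists_disjoint_measure_condSupport_inter_ne_zero (hG : G ≤ mS)
    (hatom : ∀ D, MeasurableSet D → ¬ IsGAtom mS G μ D) (hD : MeasurableSet D) (hμD : μ D ≠ 0) :
    ∃ D₁ ⊆ D, ∃ D₂ ⊆ D, MeasurableSet D₁ ∧ MeasurableSet D₂ ∧ Disjoint D₁ D₂ ∧
      μ (condSupport G μ D₁ ∩ condSupport G μ D₂) ≠ 0 := by
  obtain ⟨D₀, hD₀D, hD₀, htrace⟩ : ∃ D₀ ⊆ D, MeasurableSet D₀ ∧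
      ∀ B, MeasurableSet[G] B → μ (symmDiff D₀ (B ∩ D)) ≠ 0 := by
    have := hatom D hD
    simp only [IsGAtom] at this
    push Not at this
    exact this (pos_iff_ne_zero.2 hμD)
  set B := condSupport G μ D₀
  have hB : MeasurableSet[G] B := measurableSet_condSupport D₀
  refine ⟨D₀, hD₀D, D \ D₀, sdiff_subset, hD₀, hD.diff hD₀, disjoint_sdiff_right, fun hnull => ?_⟩
  refine htrace B hB ?_
  rw [symmDiff_def]
  refine measure_union_null (measure_mono_null (t := Bᶜ ∩ D₀) ?_ ?_)
    (measure_mono_null (t := B ∩ (D \ D₀)) ?_ ?_)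
  · exact fun s hs => ⟨fun hsB => hs.2 ⟨hsB, hD₀D hs.1⟩, hs.1⟩
  · rw [← measure_inter_condSupport_eq_zero_iff hG hB.compl hD₀, compl_inter_self, measure_empty]
  · exact fun s hs => ⟨hs.1.1, hs.1.2, hs.2⟩
  · exact (measure_inter_condSupport_eq_zero_iff hG hB (hD.diff hD₀)).1 hnull

theorem exists_pairwise_disjoint_measure_iInter_condSupport_ne_zero (hG : G ≤ mS)
    (hatom : ∀ D, MeasurableSet D → ¬ IsGAtom mS G μ D) (n : ℕ) (hD : MeasurableSet D)
    (hμD : μ D ≠ 0) :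
    ∃ A : Fin (n + 1) → Set S, (∀ i, A i ⊆ D) ∧ (∀ i, MeasurableSet (A i)) ∧
      Pairwise (Function.onFun Disjoint A) ∧ μ (⋂ i, condSupport G μ (A i)) ≠ 0 := by
  induction n generalizing D with
  | zero =>
    refine ⟨fun _ => D, fun _ => Subset.rfl, fun _ => hD,
      @Subsingleton.pairwise _ _ Fin.subsingleton_one, ?_⟩
    rw [iInter_const]
    exact measure_condSupport_ne_zero hG hD hμD
  | succ n ih =>
    obtain ⟨D₁, hD₁D, D₂, hD₂D, hD₁, hD₂, hdisj, hμB⟩ :=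
      exists_disjoint_measure_condSupport_inter_ne_zero hG hatom hD hμD
    set B := condSupport G μ D₁ ∩ condSupport G μ D₂
    have hB : MeasurableSet[G] B :=
      (measurableSet_condSupport D₁).inter (measurableSet_condSupport D₂)
    have hμBD₁ : μ (B ∩ D₁) ≠ 0 := by
      rwa [← (measure_inter_condSupport_eq_zero_iff hG hB hD₁).ne,
        inter_eq_left.2 inter_subset_left]
    obtain ⟨A, hA, hAmeas, hAdisj, hμA⟩ := ih ((hG _ hB).inter hD₁) hμBD₁
    have hAD₁ : ∀ i, A i ⊆ D₁ := fun i => (hA i).trans inter_subset_right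
    have hle : (⋂ i, condSupport G μ (A i)) ≤ᵐ[μ]
        (⋂ i, condSupport G μ (Fin.cons (α := fun _ => Set S) D₂ A i) : Set S) := by
      filter_upwards [condSupport_ae_le_of_subset hG hB (hAmeas 0)
        ((hA 0).trans inter_subset_left)] with s hs hsA
      exact mem_iInter.2 (Fin.cases (hs (mem_iInter.1 hsA 0)).2 (mem_iInter.1 hsA))
    refine ⟨Fin.cons D₂ A, Fin.cases hD₂D fun i => (hAD₁ i).trans hD₁D, Fin.cases hD₂ hAmeas,
      pairwise_fin_succ_iff.2 ⟨fun i => hdisj.mono_left (hAD₁ i),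
        fun i => hdisj.symm.mono_right (hAD₁ i), hAdisj⟩,
      fun hnull => hμA (measure_mono_null_ae hle hnull)⟩

end CondSupport

section Perturbation

variable {E ι : Type*} [NormedAddCommGroup E] [NormedSpace ℝ E] [FiniteDimensional ℝ E] [Fintype ι]

theorem exists_norm_eq_one_sum_smul_eq_zero (hcard : finrank ℝ E < Fintype.card ι) (x : ι → E) :
    ∃ a : ι → ℝ, ‖a‖ = 1 ∧ ∑ i, a i • x i = 0 := by
  obtain ⟨a, hax, ha⟩ : ∃ a : ι → ℝ, ∑ i, a i • x i = 0 ∧ ∃ i, a i ≠ 0 :=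
    Fintype.not_linearIndependent_iff.1 fun hx => hcard.not_ge hx.fintype_card_le_finrank
  refine ⟨‖a‖⁻¹ • a, norm_smul_inv_norm (𝕜 := ℝ) (Function.ne_iff.2 ha), ?_⟩
  simp only [Pi.smul_apply, smul_assoc, ← Finset.smul_sum, hax, smul_zero]

theorem exists_measurable_norm_eq_one_sum_smul_eq_zero {S : Type*} {mS : MeasurableSpace S}
    [MeasurableSpace E] [BorelSpace E] (hcard : finrank ℝ E < Fintype.card ι) {x : S → ι → E}
    (hx : Measurable x) :
    ∃ a : S → ι → ℝ, Measurable a ∧ ∀ s, ‖a s‖ = 1 ∧ ∑ i, a s i • x s i = 0 := by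
  have : ProperSpace E := FiniteDimensional.proper ℝ E
  obtain ⟨a, ha, hax⟩ := (MeasurableCompactCorrespondence.const
    (isCompact_sphere (0 : ι → ℝ) 1)).exists_measurable_selection_of_forall_exists hx
    (K := {y : (ι → E) × (ι → ℝ) | ∑ i, y.2 i • y.1 i = 0})
    (isClosed_eq (by fun_prop) continuous_const) fun s => by
      obtain ⟨a, ha, hax⟩ := exists_norm_eq_one_sum_smul_eq_zero hcard (x s)
      exact ⟨a, mem_sphere_zero_iff_norm.2 ha, hax⟩
  exact ⟨a, ha, fun s => ⟨mem_sphere_zero_iff_norm.1 (hax s).1, (hax s).2⟩⟩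

theorem sum_indicator_apply_of_pairwise_disjoint {S : Type*} {A : ι → Set S}
    (hA : Pairwise (Function.onFun Disjoint A)) (a : ι → S → ℝ) {i : ι} {s : S} (hs : s ∈ A i) :
    ∑ j, (A j).indicator (a j) s = a i s := by
  classical
  rw [Finset.sum_eq_single i (fun j _ hji => indicator_of_notMem
    (disjoint_right.1 (hA hji) hs) _) (fun hi => absurd (Finset.mem_univ i) hi),
    indicator_of_mem hs]

variable {S : Type*} {G : MeasurableSpace S} [mS : MeasurableSpace S] {μ : Measure S}

theorem condExp_sum_indicator_smul (hG : G ≤ mS) {A : ι → Set S} (hA : ∀ i, MeasurableSet (A i))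
    {a : ι → S → ℝ} (ha : ∀ i, StronglyMeasurable[G] (a i)) {C : ℝ} (haC : ∀ i s, ‖a i s‖ ≤ C)
    {v : S → E} (hv : Integrable v μ) :
    μ[(fun s => ∑ i, (A i).indicator (a i) s) • v | G] =ᵐ[μ]
      fun s => ∑ i, a i s • (μ[(A i).indicator v | G]) s := by
  have hint : ∀ i, Integrable (a i • (A i).indicator v) μ := fun i =>
    (hv.indicator (hA i)).bdd_smul C ((ha i).mono hG).aestronglyMeasurable (.of_forall (haC i))
  have hsum : (fun s => ∑ i, (A i).indicator (a i) s) • v = ∑ i, a i • (A i).indicator v := by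
    ext s
    simp only [Pi.smul_apply', Finset.sum_smul, Finset.sum_apply, ← indicator_smul_apply_left,
      ← indicator_smul_apply]
  rw [hsum]
  filter_upwards [condExp_finsetSum (s := Finset.univ) (fun i _ => hint i) G,
    ae_all_iff.2 fun i => condExp_smul_of_aestronglyMeasurable_left
      (m := G) (ha i).aestronglyMeasurable
      (hint i) (hv.indicator (hA i))] with s hs_sum hs_smul
  simp only [hs_sum, Finset.sum_apply, hs_smul, Pi.smul_apply']

variable [IsFiniteMeasure μ]

theorem not_sum_indicator_ae_eq_zero (hG : G ≤ mS) {A : ι → Set S}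
    (hA : ∀ i, MeasurableSet (A i)) (hdisj : Pairwise (Function.onFun Disjoint A))
    (hμA : μ (⋂ i, condSupport G μ (A i)) ≠ 0) {a : S → ι → ℝ} (ha : Measurable[G] a)
    (hne : ∀ s, a s ≠ 0) :
    ¬ (fun s => ∑ i, (A i).indicator (fun t => a t i) s) =ᵐ[μ] 0 := by
  intro hzero
  have hzero_on_condSupport : ∀ i, ∀ᵐ s ∂μ, s ∈ condSupport G μ (A i) → a s i = 0 := by
    intro i
    have hB : MeasurableSet[G] {s | a s i ≠ 0} :=
      ((measurable_pi_apply i).comp ha (measurableSet_singleton 0)).compl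
    have hnull : μ ({s | a s i ≠ 0} ∩ A i) = 0 := by
      refine measure_eq_zero_iff_ae_notMem.2 (hzero.mono fun s hs_zero hs => hs.1 ?_)
      exact (sum_indicator_apply_of_pairwise_disjoint hdisj (fun j t => a t j) hs.2).symm.trans
        hs_zero
    rw [← measure_inter_condSupport_eq_zero_iff hG hB (hA i)] at hnull
    filter_upwards [measure_eq_zero_iff_ae_notMem.1 hnull] with s hs hsA
    exact not_not.1 fun hsi => hs ⟨hsi, hsA⟩
  refine hμA (measure_eq_zero_iff_ae_notMem.2 ?_)
  filter_upwards [ae_all_iff.2 hzero_on_condSupport] with s hs hsA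
  exact hne s (funext fun i => hs i (mem_iInter.1 hsA i))

variable [MeasurableSpace E] [BorelSpace E]

theorem exists_perturbation_condExp_smul_eq_zero (hG : G ≤ mS)
    (hatom : ∀ D, MeasurableSet D → ¬ IsGAtom mS G μ D) {v : S → E} (hv : Integrable v μ)
    {D : Set S} (hD : MeasurableSet D) (hμD : μ D ≠ 0) :
    ∃ φ : S → ℝ, Measurable φ ∧ (∀ s, |φ s| ≤ 1) ∧ (∀ s ∉ D, φ s = 0) ∧ ¬ φ =ᵐ[μ] 0 ∧
      μ[φ • v | G] =ᵐ[μ] 0 := by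
  obtain ⟨A, hAD, hA, hdisj, hμA⟩ := exists_pairwise_disjoint_measure_iInter_condSupport_ne_zero
    hG hatom (finrank ℝ E) hD hμD
  have hcard : finrank ℝ E < Fintype.card (Fin (finrank ℝ E + 1)) := by
    rw [Fintype.card_fin]
    exact Nat.lt_succ_self _
  have hx : Measurable[G] fun s i => (μ[(A i).indicator v | G]) s :=
    @measurable_pi_lambda _ _ _ G _ _ fun i => stronglyMeasurable_condExp.measurable
  obtain ⟨a, ha, hax⟩ := exists_measurable_norm_eq_one_sum_smul_eq_zero hcard hx
  have ha_le : ∀ i s, ‖a s i‖ ≤ 1 := fun i s => (norm_le_pi_norm (a s) i).trans (hax s).1.le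
  refine ⟨fun s => ∑ i, (A i).indicator (fun t => a t i) s, ?_, fun s => ?_, ?_, ?_, ?_⟩
  · have := ha.mono hG le_rfl
    fun_prop (disch := exact hA _)
  · by_cases hs : ∃ i, s ∈ A i
    · obtain ⟨i, hi⟩ := hs
      have hs_eq := sum_indicator_apply_of_pairwise_disjoint hdisj (fun j t => a t j) hi
      exact (congrArg abs hs_eq).trans_le (ha_le i s)
    · push Not at hs
      simp only [indicator_of_notMem (hs _), Finset.sum_const_zero, abs_zero, zero_le_one]
  · intro s hs
    exact Finset.sum_eq_zero fun i _ => indicator_of_notMem (fun hi => hs (hAD i hi)) _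
  · exact not_sum_indicator_ae_eq_zero hG hA hdisj hμA ha fun s hs => by
      simpa [hs] using (hax s).1
  · filter_upwards [condExp_sum_indicator_smul hG hA
      (fun i => ((measurable_pi_apply i).comp ha).stronglyMeasurable) ha_le hv] with s hs
    exact hs.trans (hax s).2

end Perturbation

section ExtremePoints

theorem inclusionInDoubleDual_surjective (H : Type*) [NormedAddCommGroup H]
    [InnerProductSpace ℝ H] [CompleteSpace H] :
    Function.Surjective (NormedSpace.inclusionInDoubleDual ℝ H) := by
  intro Φ
  let z := (InnerProductSpace.toDual ℝ H).symm
    (Φ.comp (InnerProductSpace.toDual ℝ H).toContinuousLinearEquiv.toContinuousLinearMap)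
  refine ⟨z, ContinuousLinearMap.ext fun l => ?_⟩
  obtain ⟨y, rfl⟩ := (InnerProductSpace.toDual ℝ H).surjective l
  rw [NormedSpace.dual_def, InnerProductSpace.toDual_apply_apply, real_inner_comm,
    ← InnerProductSpace.toDual_apply_apply]
  simp [z]

theorem extremePoints_nonempty_of_isClosed_of_isBounded {X : Type*} [NormedAddCommGroup X]
    [NormedSpace ℝ X] (hX : Function.Surjective (NormedSpace.inclusionInDoubleDual ℝ X))
    {W : Set X} (hne : W.Nonempty) (hconv : Convex ℝ W) (hclosed : IsClosed W)
    (hbdd : Bornology.IsBounded W) : (W.extremePoints ℝ).Nonempty := by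
  have hcompact : IsCompact (toWeakSpace ℝ X '' W) := by
    rw [← hclosed.closure_eq, hconv.toWeakSpace_closure ℝ]
    refine NormedSpace.isCompact_closure_of_isBounded ℝ X _ ?_ ?_
    · rwa [preimage_image_eq _ (toWeakSpace ℝ X).injective]
    · rw [range_eq_univ.2]
      · exact subset_univ _
      · exact hX
  have : LocallyConvexSpace ℝ (WeakSpace ℝ X) :=
    WeakBilin.locallyConvexSpace (B := (topDualPairing ℝ X).flip)
  rw [← image_nonempty (f := toWeakSpace ℝ X), image_extremePoints]
  exact hcompact.extremePoints_nonempty (hne.image _)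

end ExtremePoints

section LpSelections

variable {S : Type*} {G : MeasurableSpace S} [mS : MeasurableSpace S] {μ : Measure S}

theorem exists_measurable_forall_mem_ae_eq {E : Type*} [MeasurableSpace E]
    {X : S → Set E} {u f : S → E} (hu : Measurable u) (huX : ∀ᵐ s ∂μ, u s ∈ X s)
    (hf : Measurable f) (hfX : ∀ s, f s ∈ X s) :
    ∃ g : S → E, Measurable g ∧ (∀ s, g s ∈ X s) ∧ g =ᵐ[μ] u := by
  classical
  obtain ⟨N, hN_sub, hN, hμN⟩ := exists_measurable_superset_of_null (ae_iff.1 huX)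
  refine ⟨N.piecewise f u, hf.piecewise hN hu, fun s => ?_, ?_⟩
  · by_cases hs : s ∈ N
    · simpa only [piecewise_eq_of_mem _ _ _ hs] using hfX s
    · simpa only [piecewise_eq_of_notMem _ _ _ hs] using not_not.1 fun h => hs (hN_sub h)
  · filter_upwards [measure_eq_zero_iff_ae_notMem.1 hμN] with s hs
    exact piecewise_eq_of_notMem _ _ _ hs

variable {E : Type*} [NormedAddCommGroup E]

theorem isClosed_setOf_ae_mem {p : ℝ≥0∞} [Fact (1 ≤ p)] {K : S → Set E}
    (hK : ∀ s, IsClosed (K s)) : IsClosed {u : Lp E p μ | ∀ᵐ s ∂μ, u s ∈ K s} := by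
  refine IsSeqClosed.isClosed fun u v hu huv => ?_
  obtain ⟨n, -, hn⟩ := (tendstoInMeasure_of_tendsto_Lp huv).exists_seq_tendsto_ae
  filter_upwards [hn, ae_all_iff.2 hu] with s hs hus
  exact (hK s).mem_of_tendsto hs (Eventually.of_forall fun k => hus (n k))

theorem coeFn_smul_add_smul [NormedSpace ℝ E] {p : ℝ≥0∞} (a b : ℝ) (u v : Lp E p μ) :
    ⇑(a • u + b • v) =ᵐ[μ] fun s => a • u s + b • v s := by
  filter_upwards [Lp.coeFn_add (a • u) (b • v), Lp.coeFn_smul a u, Lp.coeFn_smul b v]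
    with s hadd hu hv
  rw [hadd, Pi.add_apply, hu, hv, Pi.smul_apply, Pi.smul_apply]

theorem convex_setOf_ae_mem [NormedSpace ℝ E] {p : ℝ≥0∞} {K : S → Set E}
    (hK : ∀ s, Convex ℝ (K s)) : Convex ℝ {u : Lp E p μ | ∀ᵐ s ∂μ, u s ∈ K s} := by
  intro u hu v hv a b ha hb hab
  filter_upwards [hu, hv, coeFn_smul_add_smul a b u v] with s hus hvs hs
  rw [hs]
  exact hK s hus hvs ha hb hab

variable [InnerProductSpace ℝ E]

variable (G μ) in
/-- The square-integrable almost-everywhere selections of the correspondence `K` with the same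
conditional expectation given `G` as `f`. The latter is encoded by integrals over `G`-measurable
sets, which depend weakly continuously on the selection. -/
def lpSelections (K : S → Set E) (f : S → E) : Set (Lp E 2 μ) :=
  {u | (∀ᵐ s ∂μ, u s ∈ K s) ∧ ∀ A, MeasurableSet[G] A → ∫ s in A, u s ∂μ = ∫ s in A, f s ∂μ}

variable [IsFiniteMeasure μ] {K : S → Set E} {f : S → E}

theorem convex_lpSelections (hK : ∀ s, Convex ℝ (K s)) : Convex ℝ (lpSelections G μ K f) := by
  refine fun u hu v hv a b ha hb hab =>
    ⟨convex_setOf_ae_mem hK hu.1 hv.1 ha hb hab, fun A hA => ?_⟩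
  have hint (w : Lp E 2 μ) : Integrable w (μ.restrict A) :=
    ((Lp.memLp w).integrable one_le_two).restrict
  calc ∫ s in A, (a • u + b • v) s ∂μ
      = ∫ s in A, (a • u s + b • v s) ∂μ :=
        integral_congr_ae (ae_restrict_of_ae (coeFn_smul_add_smul a b u v))
    _ = ∫ s in A, a • u s ∂μ + ∫ s in A, b • v s ∂μ :=
        integral_add ((hint u).smul a) ((hint v).smul b)
    _ = a • ∫ s in A, u s ∂μ + b • ∫ s in A, v s ∂μ := by rw [integral_smul, integral_smul]
    _ = ∫ s in A, f s ∂μ := by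
        rw [hu.2 A hA, hv.2 A hA, Convex.combo_self hab]

theorem isClosed_lpSelections [CompleteSpace E] (hG : G ≤ mS) (hK : ∀ s, IsClosed (K s)) :
    IsClosed (lpSelections G μ K f) := by
  simp only [lpSelections, ofPred_and, ofPred_forall]
  refine (isClosed_setOf_ae_mem hK).inter ?_
  refine isClosed_iInter fun A => isClosed_iInter fun hA => ?_
  have hinner : {u : Lp E 2 μ | ∫ s in A, u s ∂μ = ∫ s in A, f s ∂μ} =
      ⋂ c : E, {u | inner ℝ (indicatorConstLp 2 (hG A hA) (measure_ne_top μ A) c) u =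
        inner ℝ c (∫ s in A, f s ∂μ)} := by
    ext u
    simp only [mem_iInter, mem_ofPred_eq, L2.inner_indicatorConstLp_eq_inner_setIntegral]
    exact ⟨fun h c => by rw [h], ext_inner_left ℝ⟩
  rw [hinner]
  exact isClosed_iInter fun c => isClosed_eq (by fun_prop) continuous_const

theorem isBounded_lpSelections {R : ℝ} (hK : ∀ᵐ s ∂μ, K s ⊆ Metric.closedBall 0 R) :
    Bornology.IsBounded (lpSelections G μ K f) := by
  refine isBounded_iff_forall_norm_le.2 ⟨_, fun u hu => Lp.norm_le_of_ae_bound (C := max R 0) ?_ ?_⟩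
  · exact le_max_right R 0
  · filter_upwards [hK, hu.1] with s hKs hus
    exact (mem_closedBall_zero_iff.1 (hKs hus)).trans (le_max_left R 0)

theorem add_toLp_mem_lpSelections [CompleteSpace E] (hG : G ≤ mS) {u : Lp E 2 μ}
    (hu : u ∈ lpSelections G μ K f)
    {d : S → E} (hd : MemLp d 2 μ) (hdK : ∀ᵐ s ∂μ, u s + d s ∈ K s) (hdG : μ[d | G] =ᵐ[μ] 0) :
    u + hd.toLp d ∈ lpSelections G μ K f := by
  have hadd : ⇑(u + hd.toLp d) =ᵐ[μ] fun s => u s + d s := by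
    filter_upwards [Lp.coeFn_add u (hd.toLp d), hd.coeFn_toLp] with s hs hds
    rw [hs, Pi.add_apply, hds]
  refine ⟨?_, fun A hA => ?_⟩
  · filter_upwards [hadd, hdK] with s hs hds
    rwa [hs]
  · have hd_int := hd.integrable one_le_two
    have hdA : ∫ s in A, d s ∂μ = 0 := by
      rw [← setIntegral_condExp hG hd_int hA, integral_congr_ae (ae_restrict_of_ae hdG)]
      exact integral_zero _ _
    rw [integral_congr_ae (ae_restrict_of_ae hadd),
      integral_add ((Lp.memLp u).integrable one_le_two).restrict hd_int.restrict, hdA, add_zero,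
      hu.2 A hA]

variable [FiniteDimensional ℝ E] [MeasurableSpace E] [BorelSpace E]

theorem ae_eq_zero_of_mem_extremePoints_lpSelections (hG : G ≤ mS)
    (hatom : ∀ D, MeasurableSet D → ¬ IsGAtom mS G μ D) (hK : ∀ s, Convex ℝ (K s))
    {u : Lp E 2 μ} (hu : u ∈ (lpSelections G μ K f).extremePoints ℝ)
    {v : S → E} (hv : Measurable v) (hv_memLp : MemLp v 2 μ)
    (hadd : ∀ᵐ s ∂μ, u s + v s ∈ K s) (hsub : ∀ᵐ s ∂μ, u s - v s ∈ K s) : v =ᵐ[μ] 0 := by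
  by_contra hne
  have hD : MeasurableSet {s | v s ≠ 0} := (hv (measurableSet_singleton 0)).compl
  obtain ⟨φ, hφ, hφ_le, hφD, hφ_ne, hφv⟩ :=
    exists_perturbation_condExp_smul_eq_zero hG hatom (hv_memLp.integrable one_le_two) hD hne
  have hd : MemLp (φ • v) 2 μ := hv_memLp.of_le (hφ.smul hv).aestronglyMeasurable <|
    Eventually.of_forall fun s =>
      (norm_smul_le _ _).trans (mul_le_of_le_one_left (norm_nonneg _) (hφ_le s))
  have hu_add : u + hd.toLp _ ∈ lpSelections G μ K f := by
    refine add_toLp_mem_lpSelections hG hu.1 hd ?_ hφv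
    filter_upwards [hadd, hsub] with s hs₁ hs₂
    exact add_smul_mem_of_add_mem_of_sub_mem (hK s) hs₁ hs₂ (hφ_le s)
  have hu_sub : u - hd.toLp _ ∈ lpSelections G μ K f := by
    rw [sub_eq_add_neg, ← hd.toLp_neg]
    refine add_toLp_mem_lpSelections hG hu.1 hd.neg ?_ ?_
    · filter_upwards [hadd, hsub] with s hs₁ hs₂
      simpa using add_smul_mem_of_add_mem_of_sub_mem (hK s) hs₁ hs₂
        ((abs_neg (φ s)).trans_le (hφ_le s))
    · filter_upwards [condExp_neg (φ • v) G (μ := μ), hφv] with s hs₁ hs₂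
      rw [hs₁, Pi.neg_apply, hs₂, Pi.zero_apply, neg_zero]
  have hd_zero : hd.toLp _ = 0 := by
    simpa using hu.2 hu_add hu_sub ⟨1 / 2, 1 / 2, by norm_num, by norm_num, by norm_num, by module⟩
  refine hφ_ne ?_
  have hφv_zero : φ • v =ᵐ[μ] 0 :=
    (MemLp.toLp_eq_toLp_iff hd .zero).1 (hd_zero.trans (MemLp.toLp_zero _).symm)
  filter_upwards [hφv_zero] with s hs
  by_cases hvs : v s = 0
  · exact hφD s fun h => h hvs
  · exact (smul_eq_zero.1 hs).resolve_right hvs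

theorem ae_mem_of_mem_extremePoints_lpSelections (hG : G ≤ mS)
    (hatom : ∀ D, MeasurableSet D → ¬ IsGAtom mS G μ D) {F : S → Set E}
    (hF : MeasurableCompactCorrespondence F) {R : ℝ}
    (hFR : ∀ᵐ s ∂μ, F s ⊆ Metric.closedBall 0 R)
    (hf : Measurable f) (hfF : ∀ s, f s ∈ convexHull ℝ (F s)) {u : Lp E 2 μ}
    (hu : u ∈ (lpSelections G μ (fun s => convexHull ℝ (F s)) f).extremePoints ℝ) :
    ∀ᵐ s ∂μ, u s ∈ F s := by
  obtain ⟨x, hx, hxF, hxu⟩ := exists_measurable_forall_mem_ae_eq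
    (Lp.stronglyMeasurable u).measurable hu.1.1 hf hfF
  obtain ⟨w, g, hw, hg, hws, hgF, hwg⟩ := hF.exists_measurable_caratheodory hx hxF
  have hvertex (i) : (fun s => w i s • (g i s - x s)) =ᵐ[μ] 0 := by
    have hv : Measurable fun s => w i s • (g i s - x s) := (hw i).smul ((hg i).sub hx)
    refine ae_eq_zero_of_mem_extremePoints_lpSelections hG hatom
      (fun s => convex_convexHull ℝ (F s)) hu hv (MemLp.of_bound hv.aestronglyMeasurable (R + R) ?_)
      ?_ ?_
    · filter_upwards [hFR] with s hs
      have hx_le := mem_closedBall_zero_iff.1 (convexHull_min hs (convex_closedBall _ _) (hxF s))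
      have hg_le := mem_closedBall_zero_iff.1 (hs (hgF i s))
      calc ‖w i s • (g i s - x s)‖ ≤ ‖g i s - x s‖ := by
            rw [norm_smul, Real.norm_of_nonneg ((hws s).1 i)]
            exact mul_le_of_le_one_left (norm_nonneg _) (mem_Icc_of_mem_stdSimplex (hws s) i).2
        _ ≤ R + R := norm_sub_le_of_le hg_le hx_le
    · filter_upwards [hxu] with s hs
      rw [← hs, ← hwg s]
      exact add_smul_sub_sum_mem (convex_convexHull ℝ (F s)) (hws s)
        (fun j => subset_convexHull ℝ _ (hgF j s)) i
    · filter_upwards [hxu] with s hs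
      rw [← hs, ← hwg s]
      exact sub_smul_sub_sum_mem (convex_convexHull ℝ (F s)) (hws s)
        (fun j => subset_convexHull ℝ _ (hgF j s)) i
  filter_upwards [hxu, ae_all_iff.2 hvertex] with s hxs hs
  obtain ⟨i, -, hi⟩ := Finset.exists_ne_zero_of_sum_ne_zero ((hws s).2.trans_ne one_ne_zero)
  rw [← hxs, ← sub_eq_zero.1 ((smul_eq_zero.1 (hs i)).resolve_left hi)]
  exact hgF i s

theorem exists_selection_setIntegral_eq_of_ae_subset_closedBall (hG : G ≤ mS)
    (hatom : ∀ D, MeasurableSet D → ¬ IsGAtom mS G μ D) {F : S → Set E}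
    (hF : MeasurableCompactCorrespondence F) {R : ℝ}
    (hFR : ∀ᵐ s ∂μ, F s ⊆ Metric.closedBall 0 R)
    (hf : Measurable f) (hfF : ∀ s, f s ∈ convexHull ℝ (F s)) :
    ∃ g : S → E, Measurable g ∧ (∀ s, g s ∈ F s) ∧
      ∀ A, MeasurableSet[G] A → ∫ s in A, g s ∂μ = ∫ s in A, f s ∂μ := by
  have hKR : ∀ᵐ s ∂μ, convexHull ℝ (F s) ⊆ Metric.closedBall 0 R :=
    hFR.mono fun s hs => convexHull_min hs (convex_closedBall _ _)
  have hf_memLp : MemLp f 2 μ := MemLp.of_bound hf.aestronglyMeasurable R <|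
    hKR.mono fun s hs => mem_closedBall_zero_iff.1 (hs (hfF s))
  have hne : (lpSelections G μ (fun s => convexHull ℝ (F s)) f).Nonempty :=
    ⟨hf_memLp.toLp f, hf_memLp.coeFn_toLp.mono fun s hs => hs ▸ hfF s, fun A _ =>
      integral_congr_ae (ae_restrict_of_ae hf_memLp.coeFn_toLp)⟩
  obtain ⟨u, hu⟩ := extremePoints_nonempty_of_isClosed_of_isBounded
    (inclusionInDoubleDual_surjective (Lp E 2 μ)) hne
    (convex_lpSelections fun s => convex_convexHull ℝ (F s))
    (isClosed_lpSelections hG fun s => (isCompact_convexHull (hF.isCompact s)).isClosed)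
    (isBounded_lpSelections hKR)
  have hne_F (s) : (F s).Nonempty := convexHull_nonempty_iff.1 ⟨f s, hfF s⟩
  obtain ⟨e, he, heF⟩ := hF.exists_measurable_selection hne_F
  obtain ⟨g, hg, hgF, hgu⟩ := exists_measurable_forall_mem_ae_eq
    (Lp.stronglyMeasurable u).measurable
    (ae_mem_of_mem_extremePoints_lpSelections hG hatom hF hFR hf hfF hu) he heF
  exact ⟨g, hg, hgF, fun A hA => (integral_congr_ae (ae_restrict_of_ae hgu)).trans (hu.1.2 A hA)⟩

end LpSelections

section Slicing

variable {S : Type*} {G : MeasurableSpace S} [mS : MeasurableSpace S] {μ : Measure S}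

theorem IsGAtom.inter_of_restrict {D T : Set S} (hT : MeasurableSet T)
    (hD : IsGAtom mS G (μ.restrict T) D) : IsGAtom mS G μ (D ∩ T) := by
  refine ⟨by simpa only [Measure.restrict_apply' hT] using hD.1, fun D₀ hD₀ hD₀_meas => ?_⟩
  obtain ⟨D₁, hD₁, hnull⟩ := hD.2 D₀ (hD₀.trans inter_subset_left) hD₀_meas
  refine ⟨D₁, hD₁, measure_mono_null ?_ ((Measure.restrict_apply' hT).symm.trans hnull)⟩
  rw [← inter_assoc, inter_symmDiff_distrib_right, inter_eq_left.2 (hD₀.trans inter_subset_right)]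

theorem integral_eq_of_forall_setIntegral_fiber_eq {ι E : Type*} [Countable ι]
    [MeasurableSpace ι] [MeasurableSingletonClass ι] [NormedAddCommGroup E] [NormedSpace ℝ E]
    {N : S → ι} (hN : Measurable N) {u v : S → E} (hu : Integrable u μ) (hv : Integrable v μ)
    (huv : ∀ n, ∫ s in N ⁻¹' {n}, u s ∂μ = ∫ s in N ⁻¹' {n}, v s ∂μ) :
    ∫ s, u s ∂μ = ∫ s, v s ∂μ := by
  have hsum {w : S → E} (hw : Integrable w μ) :
      HasSum (fun n => ∫ s in N ⁻¹' {n}, w s ∂μ) (∫ s, w s ∂μ) := by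
    have := hasSum_integral_iUnion (fun n => hN (measurableSet_singleton n))
      (pairwise_disjoint_fiber N) hw.integrableOn
    rwa [iUnion_eq_univ_iff.2 fun s => ⟨N s, rfl⟩, setIntegral_univ] at this
  exact (hsum hu).unique (by simpa only [huv] using hsum hv)

variable {E : Type*} [NormedAddCommGroup E]

theorem integrable_of_forall_mem_convexHull [NormedSpace ℝ E] [SecondCountableTopology E]
    [MeasurableSpace E] [OpensMeasurableSpace E] {F : S → Set E} {h : S → ℝ}
    (hh : Integrable h μ) (hFh : ∀ s, F s ⊆ Metric.closedBall 0 (h s)) {u : S → E}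
    (hu : Measurable u) (huF : ∀ s, u s ∈ convexHull ℝ (F s)) : Integrable u μ :=
  hh.mono' hu.aestronglyMeasurable <| Eventually.of_forall fun s =>
    mem_closedBall_zero_iff.1 (convexHull_min (hFh s) (convex_closedBall _ _) (huF s))

theorem MeasurableCompactCorrespondence.exists_measurable_nat_subset_closedBall {F : S → Set E}
    (hF : MeasurableCompactCorrespondence F) :
    ∃ N : S → ℕ, Measurable N ∧ ∀ s, F s ⊆ Metric.closedBall 0 (N s) := by
  classical
  have hex (s) : ∃ n : ℕ, F s ⊆ Metric.closedBall 0 n := by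
    obtain ⟨r, hr⟩ := (hF.isCompact s).isBounded.subset_closedBall 0
    exact ⟨⌈r⌉₊, hr.trans (Metric.closedBall_subset_closedBall (Nat.le_ceil r))⟩
  refine ⟨fun s => Nat.find (hex s), measurable_find hex fun n => ?_,
    fun s => Nat.find_spec (hex s)⟩
  convert (hF.measurableSet_hits_of_isOpen _
    (Metric.isClosed_closedBall (x := (0 : E)) (ε := n)).isOpen_compl).compl using 1
  ext s
  rw [mem_compl_iff, mem_ofPred_eq, mem_ofPred_eq, inter_compl_nonempty_iff, not_not]

variable [InnerProductSpace ℝ E] [FiniteDimensional ℝ E] [MeasurableSpace E] [BorelSpace E]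

theorem exists_selection_setIntegral_eq [SigmaFinite μ] (hG : G ≤ mS)
    (hatom : ∀ D, MeasurableSet D → ¬ IsGAtom mS G μ D) {F : S → Set E}
    (hF : MeasurableCompactCorrespondence F) {h : S → ℝ} (hh : Integrable h μ)
    (hFh : ∀ s, F s ⊆ Metric.closedBall 0 (h s)) {f : S → E} (hf : Measurable f)
    (hfF : ∀ s, f s ∈ convexHull ℝ (F s)) :
    ∃ g : S → E, Measurable g ∧ (∀ s, g s ∈ F s) ∧
      ∀ A, MeasurableSet[G] A → ∫ s in A, g s ∂μ = ∫ s in A, f s ∂μ := by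
  obtain ⟨M, hM, hFM⟩ := hF.exists_measurable_nat_subset_closedBall
  let N : S → ℕ := fun s => max (M s) (spanningSetsIndex μ s)
  have hN : Measurable N := hM.max (measurableSet_spanningSetsIndex μ)
  have hslice (n) : MeasurableSet (N ⁻¹' {n}) := hN (measurableSet_singleton n)
  have hFN (n : ℕ) : ∀ᵐ s ∂μ.restrict (N ⁻¹' {n}), F s ⊆ Metric.closedBall 0 n := by
    refine (ae_restrict_iff' (hslice n)).2 (Eventually.of_forall fun s hs => ?_)
    exact (hFM s).trans (Metric.closedBall_subset_closedBall
      (Nat.cast_le.2 ((le_max_left _ _).trans_eq hs)))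
  have hfinite (n : ℕ) : IsFiniteMeasure (μ.restrict (N ⁻¹' {n})) := by
    refine isFiniteMeasure_restrict.2 (measure_ne_top_of_subset (fun s hs => ?_)
      (measure_spanningSets_lt_top μ n).ne)
    exact mem_spanningSets_of_index_le μ s ((le_max_right _ _).trans_eq hs)
  have hslice_selection (n) := exists_selection_setIntegral_eq_of_ae_subset_closedBall
    (μ := μ.restrict (N ⁻¹' {n})) hG
    (fun D hD hatomD => hatom _ (hD.inter (hslice n)) (hatomD.inter_of_restrict (hslice n)))
    hF (hFN n) hf hfF
  choose g hg hgF hgf using hslice_selection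
  have hg_meas : Measurable fun s => g (N s) s :=
    (measurable_from_prod_countable_right (f := fun p : ℕ × S => g p.1 p.2) hg).comp
      (hN.prodMk measurable_id)
  refine ⟨fun s => g (N s) s, hg_meas, fun s => hgF _ s, fun A hA => ?_⟩
  refine integral_eq_of_forall_setIntegral_fiber_eq hN
    (integrable_of_forall_mem_convexHull hh hFh hg_meas fun s =>
      subset_convexHull ℝ _ (hgF _ s)).restrict
    (integrable_of_forall_mem_convexHull hh hFh hf hfF).restrict fun n => ?_
  rw [Measure.restrict_comm (hslice n), ← hgf n A hA, ← Measure.restrict_comm (hslice n)]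
  exact setIntegral_congr_fun (hslice n) fun s hs => by rw [show N s = n from hs]

end Slicing

theorem condexp_selection_convexHull_of_no_atom_general
    {E S : Type*} [NormedAddCommGroup E] [InnerProductSpace ℝ E] [FiniteDimensional ℝ E]
    [MeasurableSpace E] [BorelSpace E] (G : MeasurableSpace S) [mS : MeasurableSpace S]
    (lam : Measure S) (hG : G ≤ mS) [SigmaFinite (lam.trim hG)]
    (h_no_atom : ∀ D : Set S, MeasurableSet D → ¬ IsGAtom mS G lam D)
    (F : S → Set E)
    (hF_meas : ∀ U : Set E, IsOpen U → MeasurableSet {s | (F s ∩ U).Nonempty})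
    (hF_closed : ∀ s, IsClosed (F s))
    (h : S → ℝ) (hh_int : Integrable h lam) (hF_bd : ∀ s, ∀ y ∈ F s, ‖y‖ ≤ h s) :
    (∀ f : S → E, Measurable f → (∀ s, f s ∈ convexHull ℝ (F s)) →
      ∃ g : S → E, Measurable g ∧ (∀ s, g s ∈ F s) ∧ lam[g | G] =ᵐ[lam] lam[f | G]) ∧
    (∀ g : S → E, (∀ s, g s ∈ F s) → ∀ s, g s ∈ convexHull ℝ (F s)) := by
  refine ⟨fun f hf hfF => ?_, fun g hg s => subset_convexHull ℝ _ (hg s)⟩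
  have : SigmaFinite lam := .of_trim hG
  have hF_ball (s) : F s ⊆ Metric.closedBall 0 (h s) := fun y hy =>
    mem_closedBall_zero_iff.2 (hF_bd s y hy)
  have hF : MeasurableCompactCorrespondence F :=
    ⟨fun s => (isCompact_closedBall 0 (h s)).of_isClosed_subset (hF_closed s) (hF_ball s), hF_meas⟩
  obtain ⟨g, hg, hgF, hgf⟩ :=
    exists_selection_setIntegral_eq hG h_no_atom hF hh_int hF_ball hf hfF
  have hf_int := integrable_of_forall_mem_convexHull hh_int hF_ball hf hfF
  have hg_int := integrable_of_forall_mem_convexHull hh_int hF_ball hg fun s =>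
    subset_convexHull ℝ _ (hgF s)
  refine ⟨g, hg, hgF, ae_eq_condExp_of_forall_setIntegral_eq hG hf_int
    (fun A _ _ => integrable_condExp.integrableOn) (fun A hA _ => ?_)
    stronglyMeasurable_condExp.aestronglyMeasurable⟩
  rw [setIntegral_condExp hG hg_int hA, hgf A hA]

/-- **Dynkin–Evstigneev**: if `Σ` has no `G`-atom, then for any measurable, integrably
bounded, closed-valued correspondence `F` from `S` to `ℝ^m`, the sets of conditional
expectations of measurable selections of `F` and of its pointwise convex hull coincide. -/
theorem condexp_selection_convexHull_of_no_atom
    {m : ℕ} {S : Type*} [mS : MeasurableSpace S]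
    (lam : Measure S) [IsProbabilityMeasure lam]
    (G : MeasurableSpace S) (hG : G ≤ mS)
    (h_no_atom : ∀ D : Set S, MeasurableSet[mS] D → ¬ IsGAtom mS G lam D)
    (F : S → Set (EuclideanSpace ℝ (Fin m)))
    (hF_meas : ∀ U : Set (EuclideanSpace ℝ (Fin m)), IsOpen U →
      MeasurableSet[mS] {s | (F s ∩ U).Nonempty})
    (hF_closed : ∀ s, IsClosed (F s))
    -- integrably bounded
    (h : S → ℝ) (hh_int : Integrable h lam)
    (hF_bd : ∀ s, ∀ y ∈ F s, ‖y‖ ≤ h s) :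
    -- every measurable selection of `co F` has the same conditional expectation as some
    -- measurable selection of `F` ...
    (∀ f : S → EuclideanSpace ℝ (Fin m), Measurable[mS] f →
      (∀ s, f s ∈ convexHull ℝ (F s)) →
      ∃ g : S → EuclideanSpace ℝ (Fin m), Measurable[mS] g ∧ (∀ s, g s ∈ F s) ∧
        lam[g|G] =ᵐ[lam] lam[f|G]) ∧
    -- ... and conversely every measurable selection of `F` is a selection of `co F`
    (∀ g : S → EuclideanSpace ℝ (Fin m), (∀ s, g s ∈ F s) →
      ∀ s, g s ∈ convexHull ℝ (F s)) :=
  condexp_selection_convexHull_of_no_atom_general (mS := mS) G lam hG h_no_atom F hF_meas hF_closed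
    h hh_int hF_bd
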